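/- Lévy gauge bound between augmented and non-augmented empirical cdfs: let F̂(t) = (1/(n+1)) Σ_{i=1}^{n+1} 1{C_n(t_i, D_{n+1}∖t_i) ≤ t} and Ĝ(t) = (1/n) Σ_{i=1}^n 1{C_{n−1}(t_i, T_n∖t_i) ≤ t}. Then for all δ ≥ 0 we have ld_δ(F̂, Ĝ) ≤ 1/(n+1) + (1/(n+1)) Σ_{i=1}^n 1{ |C_n(t_i, D_{n+1}∖t_i) − C_{n−1}(t_i, T_n∖t_i)| > δ }. -/

import Mathlib

open MeasureTheory Filter Set

noncomputable section

/-- The space of a single feature-response pair: response in `ℝ`, features in `ℝ^(p n)`. -/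
abbrev Zn (p : ℕ → ℕ) (n : ℕ) : Type := ℝ × (Fin (p n) → ℝ)

/-- A conformity score family: measurable in both arguments and symmetric under permutations of
the second (tuple) argument. -/
structure IsScoreFamily (p : ℕ → ℕ)
    (C : (n m : ℕ) → Zn p n → (Fin m → Zn p n) → ℝ) : Prop where
  meas : ∀ n m, Measurable (fun q : Zn p n × (Fin m → Zn p n) => C n m q.1 q.2)
  symm : ∀ n m z (v : Fin m → Zn p n) (π : Equiv.Perm (Fin m)), C n m z (v ∘ π) = C n m z v

/-- The Lévy gauge with tolerance parameter `δ` between two cdfs. -/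
def levyGauge (F G : ℝ → ℝ) (δ : ℝ) : ℝ :=
  sInf {ε : ℝ | 0 ≤ ε ∧ ∀ t : ℝ, F (t - δ) - ε ≤ G t ∧ G t ≤ F (t + δ) + ε}

/-!
Let `m - n` points be adjoined to `n` points whose scores, in the process, move by more than `δ` at
`K` indices. Up to the shift `δ`, the sublevel counts of the common points differ by at most `K`,
and the new points add between `0` and `m - n`. Replacing the normalization `n` of a count `b ≤ n`
by `m` is absorbed by `b / m ≤ b / n ≤ (b + (m - n)) / m`. In each of the two inequalities only one
of these effects costs `m - n`: the new points in the upper bound on the augmented cdf, the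
normalization in the lower one. So the total error is `(m - n + K) / m`, and here `m = n + 1`.
-/

open scoped Finset

theorem levyGauge_le {F G : ℝ → ℝ} {δ ε : ℝ} (hε : 0 ≤ ε)
    (h : ∀ t, F (t - δ) - ε ≤ G t ∧ G t ≤ F (t + δ) + ε) : levyGauge F G δ ≤ ε :=
  csInf_le ⟨0, fun _ hη => hη.1⟩ ⟨hε, h⟩

section Division

variable {𝕜 : Type*} [Field 𝕜] [LinearOrder 𝕜] [IsStrictOrderedRing 𝕜] {b n m : 𝕜}

theorem div_le_div_of_nonneg_of_le_of_le (hb : 0 ≤ b) (hbn : b ≤ n) (hnm : n ≤ m) :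
    b / m ≤ b / n := by
  rcases hb.eq_or_lt with rfl | hb
  · simp only [zero_div, le_refl]
  · exact div_le_div_of_nonneg_left hb.le (hb.trans_le hbn) hnm

theorem div_le_add_sub_div (hb : 0 ≤ b) (hbn : b ≤ n) (hnm : n ≤ m) :
    b / n ≤ (b + (m - n)) / m := by
  rcases (hb.trans hbn).eq_or_lt with rfl | hn
  · rw [div_zero]
    exact div_nonneg (add_nonneg hb (sub_nonneg.2 hnm)) hnm
  · rw [div_le_div_iff₀ hn (hn.trans_le hnm)]
    linear_combination mul_nonneg (sub_nonneg.2 hbn) (sub_nonneg.2 hnm)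

end Division

section Counting

variable {ι κ : Type*} [Fintype ι] [Fintype κ]

theorem card_filter_comp_embedding_le (e : ι ↪ κ) (P : κ → Prop) [DecidablePred P] :
    #{i | P (e i)} ≤ #{k | P k} :=
  Finset.card_le_card_of_injOn e (by simp [Set.MapsTo]) e.injective.injOn

theorem card_filter_add_card_le_card_filter_comp_add_card (e : ι ↪ κ) (P : κ → Prop)
    [DecidablePred P] :
    #{k | P k} + Fintype.card ι ≤ #{i | P (e i)} + Fintype.card κ := by
  have h_compl := card_filter_comp_embedding_le e (fun k => ¬ P k)
  have hι := Finset.card_filter_add_card_filter_not (s := Finset.univ) (fun i => P (e i))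
  have hκ := Finset.card_filter_add_card_filter_not (s := Finset.univ) (fun k => P k)
  rw [Finset.card_univ] at hι hκ
  omega

theorem card_sublevel_le_add_card_deviation {G : Type*} [AddCommGroup G] [LinearOrder G]
    [IsOrderedAddMonoid G] (x y : ι → G) (δ t : G) :
    #{i | x i ≤ t} ≤ #{i | y i ≤ t + δ} + #{i | δ < |x i - y i|} := by
  classical
  refine (Finset.card_le_card fun i hi => ?_).trans (Finset.card_union_le _ _)
  simp only [Finset.mem_union, Finset.mem_filter_univ] at hi ⊢
  by_contra! ⟨h_above, h_close⟩
  have h_le : y i ≤ x i + δ := sub_le_iff_le_add'.1 (abs_sub_le_iff.1 h_close).2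
  exact h_above.not_ge (h_le.trans (add_le_add_left hi δ))

end Counting

section EmpiricalCDF

variable {ι κ : Type*} [Fintype ι] [Fintype κ]

/-- The empirical cdf of a finite family of reals: the fraction of its members that are `≤ t`. The
empty family gets the zero function, by `0 / 0 = 0`. -/
def empiricalCDF (x : ι → ℝ) : ℝ → ℝ :=
  fun t => (#{i | x i ≤ t} : ℝ) / Fintype.card ι

/-- The tolerance between the empirical cdfs of `y : ι → ℝ` and of a family `x : κ → ℝ` that
augments a perturbation `x ∘ e` of it: the number of added points plus the number of `i` whose value
moves by more than `δ`, as a fraction of the augmented size. -/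
def augmentationError (e : ι ↪ κ) (x : κ → ℝ) (y : ι → ℝ) (δ : ℝ) : ℝ :=
  ((Fintype.card κ : ℝ) - Fintype.card ι + #{i | δ < |x (e i) - y i|}) / Fintype.card κ

theorem empiricalCDF_eq_sum (x : ι → ℝ) :
    empiricalCDF x = fun t => (∑ i, if x i ≤ t then (1 : ℝ) else 0) / Fintype.card ι := by
  simp only [Finset.sum_boole]
  rfl

theorem augmentationError_castSuccEmb {n : ℕ} (x : Fin (n + 1) → ℝ) (y : Fin n → ℝ) (δ : ℝ) :
    augmentationError Fin.castSuccEmb x y δ =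
      1 / (n + 1) + (1 / (n + 1)) * ∑ i, if δ < |x i.castSucc - y i| then (1 : ℝ) else 0 := by
  rw [augmentationError, Fintype.card_fin, Fintype.card_fin, Nat.cast_add_one,
    add_sub_cancel_left, add_div, one_div_mul_eq_div, Finset.sum_boole]
  rfl

theorem augmentationError_nonneg (e : ι ↪ κ) (x : κ → ℝ) (y : ι → ℝ) (δ : ℝ) :
    0 ≤ augmentationError e x y δ :=
  have h_added : (0 : ℝ) ≤ Fintype.card κ - Fintype.card ι :=
    sub_nonneg.2 (Nat.cast_le.2 (Fintype.card_le_of_embedding e))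
  div_nonneg (add_nonneg h_added (Nat.cast_nonneg _)) (Nat.cast_nonneg _)

theorem empiricalCDF_augmented_le (e : ι ↪ κ) (x : κ → ℝ) (y : ι → ℝ) (δ t : ℝ) :
    empiricalCDF x t ≤ empiricalCDF y (t + δ) + augmentationError e x y δ := by
  have h_added : (#{k | x k ≤ t} : ℝ) + Fintype.card ι ≤ #{i | x (e i) ≤ t} + Fintype.card κ :=
    mod_cast card_filter_add_card_le_card_filter_comp_add_card e (x · ≤ t)
  have h_moved : (#{i | x (e i) ≤ t} : ℝ) ≤
      #{i | y i ≤ t + δ} + #{i | δ < |x (e i) - y i|} :=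
    mod_cast card_sublevel_le_add_card_deviation (x ∘ e) y δ t
  have h_card : (#{i | y i ≤ t + δ} : ℝ) ≤ Fintype.card ι := mod_cast Finset.card_le_univ _
  calc (#{k | x k ≤ t} : ℝ) / Fintype.card κ
      ≤ (#{i | y i ≤ t + δ} +
          ((Fintype.card κ : ℝ) - Fintype.card ι + #{i | δ < |x (e i) - y i|})) /
            Fintype.card κ :=
        div_le_div_of_nonneg_right (by linarith) (Nat.cast_nonneg _)
    _ = #{i | y i ≤ t + δ} / Fintype.card κ + augmentationError e x y δ := add_div _ _ _
    _ ≤ empiricalCDF y (t + δ) + augmentationError e x y δ := by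
        gcongr
        exact div_le_div_of_nonneg_of_le_of_le (Nat.cast_nonneg _) h_card
          (Nat.cast_le.2 (Fintype.card_le_of_embedding e))

theorem empiricalCDF_le_augmented (e : ι ↪ κ) (x : κ → ℝ) (y : ι → ℝ) (δ t : ℝ) :
    empiricalCDF y t ≤ empiricalCDF x (t + δ) + augmentationError e x y δ := by
  have h_added : (#{i | x (e i) ≤ t + δ} : ℝ) ≤ #{k | x k ≤ t + δ} :=
    mod_cast card_filter_comp_embedding_le e (x · ≤ t + δ)
  have h_moved : (#{i | y i ≤ t} : ℝ) ≤
      #{i | x (e i) ≤ t + δ} + #{i | δ < |x (e i) - y i|} := by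
    simp only [abs_sub_comm (x _)]
    exact mod_cast card_sublevel_le_add_card_deviation y (x ∘ e) δ t
  have h_card : (#{i | y i ≤ t} : ℝ) ≤ Fintype.card ι := mod_cast Finset.card_le_univ _
  calc empiricalCDF y t
      ≤ (#{i | y i ≤ t} + ((Fintype.card κ : ℝ) - Fintype.card ι)) / Fintype.card κ :=
        div_le_add_sub_div (Nat.cast_nonneg _) h_card
          (Nat.cast_le.2 (Fintype.card_le_of_embedding e))
    _ ≤ (#{k | x k ≤ t + δ} +
          ((Fintype.card κ : ℝ) - Fintype.card ι + #{i | δ < |x (e i) - y i|})) /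
            Fintype.card κ :=
        div_le_div_of_nonneg_right (by linarith) (Nat.cast_nonneg _)
    _ = empiricalCDF x (t + δ) + augmentationError e x y δ := add_div _ _ _

theorem levyGauge_Fhat_Ghat_bound_general (e : ι ↪ κ) (x : κ → ℝ) (y : ι → ℝ) (δ : ℝ) :
    levyGauge (empiricalCDF x) (empiricalCDF y) δ ≤ augmentationError e x y δ := by
  refine levyGauge_le (augmentationError_nonneg e x y δ) fun t =>
    ⟨?_, empiricalCDF_le_augmented e x y δ t⟩
  simpa only [sub_add_cancel, sub_le_iff_le_add] using empiricalCDF_augmented_le e x y δ (t - δ)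

end EmpiricalCDF

/-- Lévy gauge bound between augmented and non-augmented empirical cdfs: with
`F̂(t) = (1/(n+1)) Σ_{i=1}^{n+1} 1{C_n(t_i, D_{n+1}∖t_i) ≤ t}` and
`Ĝ(t) = (1/n) Σ_{i=1}^n 1{C_{n−1}(t_i, T_n∖t_i) ≤ t}`, for all `δ ≥ 0`,
`ld_δ(F̂, Ĝ) ≤ 1/(n+1) + (1/(n+1)) Σ_{i=1}^n 1{|C_n(t_i, D_{n+1}∖t_i)
  − C_{n−1}(t_i, T_n∖t_i)| > δ}`. This is a deterministic statement, holding for every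
realization `z 0, …, z n` of the `n+1` data points. -/
theorem levyGauge_Fhat_Ghat_bound
    (p : ℕ → ℕ) (n : ℕ) (z : ℕ → Zn p n)
    (C : (n m : ℕ) → Zn p n → (Fin m → Zn p n) → ℝ)
    (hC : IsScoreFamily p C)
    (δ : ℝ) (hδ : 0 ≤ δ) :
    levyGauge
      (fun s => (∑ i : Fin (n + 1),
          if C n n (z (i : ℕ))
              (fun j : Fin n => if (j : ℕ) < (i : ℕ) then z (j : ℕ) else z ((j : ℕ) + 1)) ≤ s
          then (1 : ℝ) else 0) / (n + 1))
      (fun s => (∑ i : Fin n,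
          if C n (n - 1) (z (i : ℕ))
              (fun j : Fin (n - 1) => if (j : ℕ) < (i : ℕ) then z (j : ℕ) else z ((j : ℕ) + 1))
            ≤ s
          then (1 : ℝ) else 0) / n)
      δ
    ≤ 1 / (n + 1) + (1 / (n + 1)) * ∑ i : Fin n,
        if δ < |C n n (z (i : ℕ))
              (fun j : Fin n => if (j : ℕ) < (i : ℕ) then z (j : ℕ) else z ((j : ℕ) + 1))
            - C n (n - 1) (z (i : ℕ))
              (fun j : Fin (n - 1) =>
                if (j : ℕ) < (i : ℕ) then z (j : ℕ) else z ((j : ℕ) + 1))|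
        then (1 : ℝ) else 0 := by
  simpa only [empiricalCDF_eq_sum, augmentationError_castSuccEmb, Fintype.card_fin,
    Nat.cast_add_one, Fin.val_castSucc] using
    levyGauge_Fhat_Ghat_bound_general Fin.castSuccEmb
      (fun i : Fin (n + 1) => C n n (z i) fun j => if (j : ℕ) < i then z j else z (j + 1))
      (fun i : Fin n => C n (n - 1) (z i) fun j => if (j : ℕ) < i then z j else z (j + 1)) δ
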